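/- Let m, n ≥ 1, let b : Fin m → ZMod 2 and k : Fin m → ℕ with k i ≤ n for all i, and write M = M(b,k). Then the four stabilizer cosets M + S, (M + Z̄) + S, (M + X̄) + S, (M + Ȳ) + S of the n×m concatenated bit- and phase-flip repetition code are pairwise disjoint, and the weight enumerator of their union (the normalizer coset of M) equals ∏_{i} (h^{b i}_{k i, n}(x,y) + h^{b i}_{n−k i, n}(x,y)) + ∏_{i} (h^{1+b i}_{k i, n}(x,y) + h^{1+b i}_{n−k i, n}(x,y)) for all real x, y. -/

import Mathlib

/-!
A string `v` in the normalizer coset of `M(b,k)` has Z-part equal in each block `i` to the indicator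
of the first `k i` positions up to a flip `ζ i`, and its X-parities are `b i + c` for one common
`c`. The pair `(c, ∑ i, ζ i)` is determined by `v` because there is at least one block and one
position per block, and its four values single out the four logical cosets (`mem_coset_iff`,
`cosetPred_unique`); hence these are disjoint.

For fixed `c` the flips `ζ i` are unconstrained in the union over both values of `∑ i, ζ i`, so this
union is a Cartesian product of block sets and its enumerator is a product (`sum_parity_class`).
The enumerator of one block is the sum over its two possible Z-parts, with `k i` and `n - k i` ones,
and for a fixed Z-part the X-parity constraint is expanded in the characters of `ZMod 2`, which
gives `hpol` (`sum_fixed_Z`, `sum_blockSet`).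
-/

/-- The weight of a Pauli string on qubits indexed by `Fin m × Fin n`. -/
def wt2 {m n : ℕ} (v : Fin m × Fin n → ZMod 2 × ZMod 2) : ℕ :=
  (Finset.univ.filter fun p => v p ≠ (0, 0)).card

/-- The weight enumerator of a finite set of Pauli strings on `Fin m × Fin n`. -/
noncomputable def enum2 {m n : ℕ} (T : Finset (Fin m × Fin n → ZMod 2 × ZMod 2))
    (x y : ℝ) : ℝ :=
  ∑ v ∈ T, x ^ (m * n - wt2 v) * y ^ wt2 v

/-- The stabilizer group of the `n × m` concatenated bit- and phase-flip repetition code: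
even X-weight in each block, Z-part constant within each block, and the block Z-values
sum to zero. -/
def concatStab (m n : ℕ) : Finset (Fin m × Fin n → ZMod 2 × ZMod 2) :=
  Finset.univ.filter fun v =>
    (∀ i, ∑ j, (v (i, j)).1 = 0) ∧
    ∃ ζ : Fin m → ZMod 2, (∀ i j, (v (i, j)).2 = ζ i) ∧ ∑ i, ζ i = 0

/-- `M(b,k)`: block `i` has X-part `b i` at position 0 (and 0 elsewhere) and Z-part 1 at
positions `j < k i` (and 0 elsewhere). -/
def Mbk (m n : ℕ) (b : Fin m → ZMod 2) (k : Fin m → ℕ) :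
    Fin m × Fin n → ZMod 2 × ZMod 2 :=
  fun p => (if (p.2 : ℕ) = 0 then b p.1 else 0, if (p.2 : ℕ) < k p.1 then 1 else 0)

/-- The logical-Z representative: Z-part 1 at every position of block 0. -/
def ZbarC (m n : ℕ) : Fin m × Fin n → ZMod 2 × ZMod 2 :=
  fun p => (0, if (p.1 : ℕ) = 0 then 1 else 0)

/-- The logical-X representative: X-part 1 at position 0 of every block. -/
def XbarC (m n : ℕ) : Fin m × Fin n → ZMod 2 × ZMod 2 :=
  fun p => (if (p.2 : ℕ) = 0 then 1 else 0, 0)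

/-- The logical-Y representative. -/
def YbarC (m n : ℕ) : Fin m × Fin n → ZMod 2 × ZMod 2 :=
  XbarC m n + ZbarC m n

noncomputable def fe (n : ℕ) (x y : ℝ) : ℝ := ((x + y) ^ n + (x - y) ^ n) / 2

noncomputable def fo (n : ℕ) (x y : ℝ) : ℝ := ((x + y) ^ n - (x - y) ^ n) / 2

noncomputable def g (k n : ℕ) (x y : ℝ) : ℝ := (1 / 2) * (x + y) ^ (n - k) * (2 * y) ^ k

/-- `h^b_{k,n}`. -/
noncomputable def hpol (b : ZMod 2) (k n : ℕ) (x y : ℝ) : ℝ :=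
  if k = 0 then (if b = 0 then fe n x y else fo n x y) else g k n x y

noncomputable def Fe (m : ℕ) (u w : Fin m → ℝ) : ℝ :=
  ((∏ i, (u i + w i)) + ∏ i, (u i - w i)) / 2

noncomputable def Fo (m : ℕ) (u w : Fin m → ℝ) : ℝ :=
  ((∏ i, (u i + w i)) - ∏ i, (u i - w i)) / 2

/-- The contribution of a single-qubit Pauli to the weight enumerator. -/
noncomputable def pauliFactor (x y : ℝ) (a : ZMod 2 × ZMod 2) : ℝ :=
  if a = (0, 0) then x else y

/-- The nontrivial additive character of `ZMod 2`, with values `±1`. -/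
noncomputable def parityChar (a : ZMod 2) : ℝ := if a = 0 then 1 else -1

lemma parityChar_add (a b : ZMod 2) : parityChar (a + b) = parityChar a * parityChar b := by
  have h : (1 : ZMod 2) + 1 = 0 := by decide
  have h01 : ∀ a : ZMod 2, a = 0 ∨ a = 1 := by decide
  rcases h01 a with rfl | rfl <;> rcases h01 b with rfl | rfl <;> simp [parityChar, h]

lemma parityChar_sum {ι : Type*} (s : Finset ι) (u : ι → ZMod 2) :
    parityChar (∑ j ∈ s, u j) = ∏ j ∈ s, parityChar (u j) := by
  classical
  induction s using Finset.induction_on with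
  | empty => simp [parityChar]
  | insert a s ha ih => rw [Finset.sum_insert ha, Finset.prod_insert ha, parityChar_add, ih]

lemma indicator_eq_parityChar (a β : ZMod 2) (r : ℝ) :
    (if a = β then r else 0) = (r + parityChar β * (parityChar a * r)) / 2 := by
  have h01 : ∀ a : ZMod 2, a = 0 ∨ a = 1 := by decide
  rcases h01 a with rfl | rfl <;> rcases h01 β with rfl | rfl <;> simp [parityChar]

lemma monomial_eq_prod {m n : ℕ} (v : Fin m × Fin n → ZMod 2 × ZMod 2) (x y : ℝ) :
    x ^ (m * n - wt2 v) * y ^ wt2 v = ∏ i, ∏ j, pauliFactor x y (v (i, j)) := by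
  rw [← Fintype.prod_prod_type' (f := fun i j => pauliFactor x y (v (i, j)))]
  unfold pauliFactor
  rw [Finset.prod_ite, Finset.prod_const, Finset.prod_const]
  have h := Finset.card_filter_add_card_filter_not
    (s := (Finset.univ : Finset (Fin m × Fin n))) (fun p => v p = (0, 0))
  simp only [Finset.card_univ, Fintype.card_prod, Fintype.card_fin] at h
  have h2 : wt2 v = (Finset.univ.filter fun p => ¬ v p = (0, 0)).card := rfl
  rw [h2, ← h, Nat.add_sub_cancel]

/-- Enumerator of the strings on one block with prescribed Z-part `Z` and X-parity `β`. The parity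
constraint is resolved by the character `parityChar`, after which the sum factors over positions;
positions with `Z j = 1` contribute `2y` to the untwisted product and `0` to the twisted one. -/
lemma sum_fixed_Z (n : ℕ) (β : ZMod 2) (Z : Fin n → ZMod 2) (K : ℕ)
    (hK : (Finset.univ.filter fun j => ¬ Z j = 0).card = K) (x y : ℝ) :
    ∑ u : Fin n → ZMod 2 with ∑ j, u j = β, ∏ j, pauliFactor x y (u j, Z j)
      = hpol β K n x y := by
  have hc := Finset.card_filter_add_card_filter_not
    (s := (Finset.univ : Finset (Fin n))) (fun j => Z j = 0)
  simp only [Finset.card_univ, Fintype.card_fin] at hc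
  have hK' : (Finset.univ.filter fun j => Z j = 0).card = n - K := by omega
  have huniv : ∀ f : ZMod 2 → ℝ, ∑ a, f a = f 0 + f 1 := fun f => Fin.sum_univ_two f
  have h1 : ∑ u : Fin n → ZMod 2, ∏ j, pauliFactor x y (u j, Z j)
      = (x + y) ^ (n - K) * (2 * y) ^ K := by
    rw [← Fintype.piFinset_univ, ← Finset.prod_univ_sum (fun _ => Finset.univ)
      (fun j a => pauliFactor x y (a, Z j))]
    have : ∀ j, ∑ a, pauliFactor x y (a, Z j) = if Z j = 0 then x + y else 2 * y := by
      intro j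
      rw [huniv]
      by_cases hz : Z j = 0
      · simp [pauliFactor, hz]
      · simp [pauliFactor, hz]; ring
    simp only [this]
    rw [Finset.prod_ite, Finset.prod_const, Finset.prod_const, hK, hK']
  have h2 : ∑ u : Fin n → ZMod 2,
      parityChar (∑ j, u j) * ∏ j, pauliFactor x y (u j, Z j)
      = (x - y) ^ (n - K) * 0 ^ K := by
    simp only [parityChar_sum, ← Finset.prod_mul_distrib]
    rw [← Fintype.piFinset_univ, ← Finset.prod_univ_sum (fun _ => Finset.univ)
      (fun j a => parityChar a * pauliFactor x y (a, Z j))]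
    have : ∀ j, ∑ a, parityChar a * pauliFactor x y (a, Z j)
        = if Z j = 0 then x - y else 0 := by
      intro j
      rw [huniv]
      by_cases hz : Z j = 0
      · simp [pauliFactor, parityChar, hz]; ring
      · simp [pauliFactor, parityChar, hz]
    simp only [this]
    rw [Finset.prod_ite, Finset.prod_const, Finset.prod_const, hK, hK']
  rw [Finset.sum_filter]
  simp only [indicator_eq_parityChar]
  rw [← Finset.sum_div, Finset.sum_add_distrib, ← Finset.mul_sum, h1, h2]
  unfold hpol
  by_cases h0 : K = 0
  · subst h0
    by_cases hb : β = 0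
    · simp [parityChar, hb, fe]
    · simp [parityChar, hb, fo]; ring
  · simp [h0, g]; ring

/-- The strings on one block with X-parity `β` whose Z-part is, up to a global flip, the indicator
of the first `k` positions. -/
def blockSet (n : ℕ) (β : ZMod 2) (k : ℕ) : Finset (Fin n → ZMod 2 × ZMod 2) :=
  Finset.univ.filter fun w =>
    ∑ j, (w j).1 = β ∧ ∃ z : ZMod 2, ∀ j, (w j).2 = (if (j : ℕ) < k then 1 else 0) + z

lemma sum_blockSet (n : ℕ) (hn : 1 ≤ n) (β : ZMod 2) (k : ℕ) (hk : k ≤ n) (x y : ℝ) :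
    ∑ w ∈ blockSet n β k, ∏ j, pauliFactor x y (w j)
      = hpol β k n x y + hpol β (n - k) n x y := by
  have hcard : (Finset.univ.filter fun j : Fin n => (j : ℕ) < k).card = k := by
    rw [Fin.card_filter_val_lt]; omega
  have hc := Finset.card_filter_add_card_filter_not
    (s := (Finset.univ : Finset (Fin n))) (fun j => (j : ℕ) < k)
  simp only [Finset.card_univ, Fintype.card_fin] at hc
  have hd : (1 : ZMod 2) + 1 = 0 := by decide
  have e0 := sum_fixed_Z n β (fun j => (if (j : ℕ) < k then 1 else 0) + 0) k (by
    simpa using hcard) x y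
  have e1 := sum_fixed_Z n β (fun j => (if (j : ℕ) < k then 1 else 0) + 1) (n - k) (by
    rw [show (n - k) = (Finset.univ.filter fun j : Fin n => ¬ (j : ℕ) < k).card by omega]
    congr 1
    ext j
    by_cases h : (j : ℕ) < k
    · simp [h, hd]
    · simp [h, not_lt.1 h]) x y
  rw [← e0, ← e1]
  have := Fin.sum_univ_two (fun z : ZMod 2 => ∑ u : Fin n → ZMod 2 with ∑ j, u j = β,
    ∏ j, pauliFactor x y (u j, (if (j : ℕ) < k then 1 else 0) + z))
  refine Eq.trans ?_ this
  change _ = ∑ z ∈ (Finset.univ : Finset (ZMod 2)), _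
  rw [← Finset.sum_product']
  symm
  refine Finset.sum_nbij' (fun p j => (p.2 j, (if (j : ℕ) < k then 1 else 0) + p.1))
    (fun w => ((w ⟨0, hn⟩).2 - (if 0 < k then 1 else 0), fun j => (w j).1)) ?_ ?_ ?_ ?_ ?_
  · rintro ⟨z, u⟩ h
    simp only [Finset.mem_product, Finset.mem_filter, Finset.mem_univ, true_and] at h
    simp only [blockSet, Finset.mem_filter, Finset.mem_univ, true_and]
    exact ⟨h, z, fun j => rfl⟩
  · intro w h
    simp only [blockSet, Finset.mem_filter, Finset.mem_univ, true_and] at h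
    simp only [Finset.mem_product, Finset.mem_filter, Finset.mem_univ, true_and]
    exact h.1
  · rintro ⟨z, u⟩ _
    simp
  · intro w h
    simp only [blockSet, Finset.mem_filter, Finset.mem_univ, true_and] at h
    obtain ⟨_, z, hz⟩ := h
    funext j
    ext
    · rfl
    · simp [hz]
  · intro p _
    rfl

/-- The strings with X-parity `b i + c` in block `i` and Z-part `[j < k i] + ζ i`, where the flips
`ζ` have total parity `d`. The four logical cosets are the four values of `(c, d)`. -/
def cosetPred {m n : ℕ} (b : Fin m → ZMod 2) (k : Fin m → ℕ) (c d : ZMod 2)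
    (v : Fin m × Fin n → ZMod 2 × ZMod 2) : Prop :=
  (∀ i, ∑ j, (v (i, j)).1 = b i + c) ∧
    ∃ ζ : Fin m → ZMod 2,
      (∀ i j, (v (i, j)).2 = (if (j : ℕ) < k i then 1 else 0) + ζ i) ∧ ∑ i, ζ i = d

lemma cosetPred_unique {m n : ℕ} (hm : 1 ≤ m) (hn : 1 ≤ n) {b : Fin m → ZMod 2}
    {k : Fin m → ℕ} {c d c' d' : ZMod 2} {v : Fin m × Fin n → ZMod 2 × ZMod 2}
    (h : cosetPred b k c d v) (h' : cosetPred b k c' d' v) : c = c' ∧ d = d' := by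
  obtain ⟨hx, ζ, hζ, hs⟩ := h
  obtain ⟨hx', ζ', hζ', hs'⟩ := h'
  refine ⟨add_left_cancel ((hx ⟨0, hm⟩).symm.trans (hx' ⟨0, hm⟩)), ?_⟩
  rw [← hs, ← hs']
  exact Finset.sum_congr rfl fun i _ =>
    add_left_cancel ((hζ i ⟨0, hn⟩).symm.trans (hζ' i ⟨0, hn⟩))

lemma mem_coset_iff {m n : ℕ} {b : Fin m → ZMod 2} {k : Fin m → ℕ} {c d : ZMod 2}
    {N : Fin m × Fin n → ZMod 2 × ZMod 2} (hN : cosetPred b k c d N)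
    (v : Fin m × Fin n → ZMod 2 × ZMod 2) :
    v ∈ (concatStab m n).image (fun s => N + s) ↔ cosetPred b k c d v := by
  obtain ⟨hx, ζ, hζ, hs⟩ := hN
  simp only [Finset.mem_image, concatStab, Finset.mem_filter, Finset.mem_univ, true_and]
  constructor
  · rintro ⟨s, ⟨h1, η, h2, h3⟩, rfl⟩
    refine ⟨fun i => ?_, fun i => ζ i + η i, fun i j => ?_, ?_⟩
    · simp [Finset.sum_add_distrib, hx, h1]
    · simp [hζ, h2, add_assoc]
    · simp [Finset.sum_add_distrib, hs, h3]
  · rintro ⟨h1, η, h2, h3⟩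
    refine ⟨v - N, ⟨fun i => ?_, fun i => η i - ζ i, fun i j => ?_, ?_⟩, by simp⟩
    · simp [Finset.sum_sub_distrib, hx, h1]
    · simp [hζ, h2]
    · simp [Finset.sum_sub_distrib, hs, h3]

lemma sum_ite_val_zero {n : ℕ} (hn : 1 ≤ n) (a : ZMod 2) :
    ∑ j : Fin n, (if (j : ℕ) = 0 then a else 0) = a := by
  obtain ⟨n, rfl⟩ : ∃ l, n = l + 1 := ⟨n - 1, by omega⟩
  simp

/-- The representative `M + X̄ᶜ + Z̄ᵈ` satisfies the defining conditions of its own coset. -/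
lemma cosetPred_rep {m n : ℕ} (hm : 1 ≤ m) (hn : 1 ≤ n) (b : Fin m → ZMod 2) (k : Fin m → ℕ)
    (c d : ZMod 2) {N : Fin m × Fin n → ZMod 2 × ZMod 2}
    (hN : ∀ i j, N (i, j) = ((if (j : ℕ) = 0 then b i else 0) + (if (j : ℕ) = 0 then c else 0),
      (if (j : ℕ) < k i then 1 else 0) + (if (i : ℕ) = 0 then d else 0))) :
    cosetPred b k c d N := by
  refine ⟨fun i => ?_, fun i => if (i : ℕ) = 0 then d else 0, fun i j => by rw [hN], ?_⟩
  · simp only [hN]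
    rw [Finset.sum_add_distrib, sum_ite_val_zero hn, sum_ite_val_zero hn]
  · exact sum_ite_val_zero hm d

/-- The union over `d` of the cosets with fixed `c` is a product of block sets, so its enumerator
is a product over blocks. -/
lemma sum_parity_class (m n : ℕ) (hn : 1 ≤ n) (b : Fin m → ZMod 2) (k : Fin m → ℕ)
    (hk : ∀ i, k i ≤ n) (c : ZMod 2) (x y : ℝ) (T : Finset (Fin m × Fin n → ZMod 2 × ZMod 2))
    (hT : ∀ v, v ∈ T ↔ ∃ d, cosetPred b k c d v) :
    enum2 T x y
      = ∏ i, (hpol (b i + c) (k i) n x y + hpol (b i + c) (n - k i) n x y) := by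
  simp only [← sum_blockSet n hn _ _ (hk _)]
  rw [Finset.prod_univ_sum]
  unfold enum2
  refine Finset.sum_nbij' (fun v i j => v (i, j)) (fun w p => w p.1 p.2) ?_ ?_ ?_ ?_ ?_
  · intro v hv
    obtain ⟨d, hx, ζ, hζ, _⟩ := (hT v).1 hv
    simp only [Fintype.mem_piFinset, blockSet, Finset.mem_filter, Finset.mem_univ, true_and]
    exact fun i => ⟨hx i, ζ i, hζ i⟩
  · intro w hw
    simp only [Fintype.mem_piFinset, blockSet, Finset.mem_filter, Finset.mem_univ, true_and] at hw
    choose hx ζ hζ using hw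
    exact (hT _).2 ⟨_, hx, ζ, hζ, rfl⟩
  · intro v _
    rfl
  · intro w _
    rfl
  · intro v _
    exact monomial_eq_prod v x y

theorem weight_enumerator_normalizer_coset_concat (m n : ℕ) (hm : 1 ≤ m) (hn : 1 ≤ n)
    (b : Fin m → ZMod 2) (k : Fin m → ℕ) (hk : ∀ i, k i ≤ n) (x y : ℝ) :
    let M := Mbk m n b k
    let C₁ := (concatStab m n).image fun s => M + s
    let C₂ := (concatStab m n).image fun s => (M + ZbarC m n) + s
    let C₃ := (concatStab m n).image fun s => (M + XbarC m n) + s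
    let C₄ := (concatStab m n).image fun s => (M + YbarC m n) + s
    Disjoint C₁ C₂ ∧ Disjoint C₁ C₃ ∧ Disjoint C₁ C₄ ∧
    Disjoint C₂ C₃ ∧ Disjoint C₂ C₄ ∧ Disjoint C₃ C₄ ∧
    enum2 (C₁ ∪ C₂ ∪ C₃ ∪ C₄) x y
      = (∏ i, (hpol (b i) (k i) n x y + hpol (b i) (n - k i) n x y))
        + ∏ i, (hpol (1 + b i) (k i) n x y + hpol (1 + b i) (n - k i) n x y) := by
  intro M C₁ C₂ C₃ C₄
  have h₁ : ∀ v, v ∈ C₁ ↔ cosetPred b k 0 0 v :=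
    mem_coset_iff (cosetPred_rep hm hn b k 0 0 fun i j => by simp [M, Mbk])
  have h₂ : ∀ v, v ∈ C₂ ↔ cosetPred b k 0 1 v :=
    mem_coset_iff (cosetPred_rep hm hn b k 0 1 fun i j => by simp [M, Mbk, ZbarC])
  have h₃ : ∀ v, v ∈ C₃ ↔ cosetPred b k 1 0 v :=
    mem_coset_iff (cosetPred_rep hm hn b k 1 0 fun i j => by simp [M, Mbk, XbarC])
  have h₄ : ∀ v, v ∈ C₄ ↔ cosetPred b k 1 1 v :=
    mem_coset_iff (cosetPred_rep hm hn b k 1 1 fun i j => by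
      simp [M, Mbk, YbarC, XbarC, ZbarC])
  have disj : ∀ {A B : Finset (Fin m × Fin n → ZMod 2 × ZMod 2)} {c d c' d' : ZMod 2},
      (∀ v, v ∈ A ↔ cosetPred b k c d v) → (∀ v, v ∈ B ↔ cosetPred b k c' d' v) →
      ¬ (c = c' ∧ d = d') → Disjoint A B := fun hA hB hne =>
    Finset.disjoint_left.2 fun v hvA hvB =>
      hne (cosetPred_unique hm hn ((hA v).1 hvA) ((hB v).1 hvB))
  have d₁₂ : Disjoint C₁ C₂ := disj h₁ h₂ (by decide)
  have d₁₃ : Disjoint C₁ C₃ := disj h₁ h₃ (by decide)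
  have d₁₄ : Disjoint C₁ C₄ := disj h₁ h₄ (by decide)
  have d₂₃ : Disjoint C₂ C₃ := disj h₂ h₃ (by decide)
  have d₂₄ : Disjoint C₂ C₄ := disj h₂ h₄ (by decide)
  have d₃₄ : Disjoint C₃ C₄ := disj h₃ h₄ (by decide)
  refine ⟨d₁₂, d₁₃, d₁₄, d₂₃, d₂₄, d₃₄, ?_⟩
  have hex : ∀ P : ZMod 2 → Prop, (∃ d, P d) ↔ P 0 ∨ P 1 := fun P => Fin.exists_fin_two
  have e₀ := sum_parity_class m n hn b k hk 0 x y (C₁ ∪ C₂) (fun v => by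
    rw [Finset.mem_union, h₁, h₂, hex])
  have e₁ := sum_parity_class m n hn b k hk 1 x y (C₃ ∪ C₄) (fun v => by
    rw [Finset.mem_union, h₃, h₄, hex])
  have hdisj : Disjoint (C₁ ∪ C₂) (C₃ ∪ C₄) := by
    simp only [Finset.disjoint_union_left, Finset.disjoint_union_right]
    exact ⟨⟨d₁₃, d₂₃⟩, d₁₄, d₂₄⟩
  simp only [add_zero] at e₀
  simp only [add_comm _ (1 : ZMod 2)] at e₁
  rw [← e₀, ← e₁, Finset.union_assoc (C₁ ∪ C₂)]
  exact Finset.sum_union hdisj
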